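/- Let k ≥ 2 be an integer, z ∈ [5/6, 11/12], and w ∈ (0, 1/48]. Let (A, B) be the alternating partition of [0,1] induced by k cut points, and suppose ∫_B σ_{w;z}^k(x) dx > 1/2 and ∫_B σ₀^k(x) dx < 1/2 (so that Bobs with value densities σ_{w;z}^k and σ₀^k strictly prefer different pieces of the partition). Then μ(B) ≤ 2/3 − 1/(6k). -/

import Mathlib

open MeasureTheory Set

noncomputable section

attribute [local instance] Classical.propDecidable

/-- A value density: measurable, bounded in `[δ, Δ]` on `[0,1]`, integrating to 1 on `[0,1]`. -/
def IsValueDensity (δ Δ : ℝ) (v : ℝ → ℝ) : Prop :=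
  Measurable v ∧ (∀ x ∈ Set.Icc (0:ℝ) 1, v x ∈ Set.Icc δ Δ) ∧
    (∫ x in Set.Icc (0:ℝ) 1, v x) = 1

/-- The value of a piece `S` under density `v`. -/
def pieceVal (v : ℝ → ℝ) (S : Set ℝ) : ℝ := ∫ x in S, v x

/-- Extended cut points: `0, c 0, …, c (k-1), 1`. -/
def extCuts (k : ℕ) (c : Fin k → ℝ) : ℕ → ℝ := fun i =>
  if i = 0 then 0 else if h : i - 1 < k then c ⟨i - 1, h⟩ else 1

/-- A valid vector of `k` cut points: nondecreasing, within `[0,1]`. -/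
def ValidCuts (k : ℕ) (c : Fin k → ℝ) : Prop :=
  Monotone c ∧ ∀ i, c i ∈ Set.Icc (0:ℝ) 1

/-- The two pieces of the alternating partition induced by cuts `c`:
`true` gives the union of even-indexed intervals, `false` the odd-indexed ones. -/
def altPiece (k : ℕ) (c : Fin k → ℝ) (b : Bool) : Set ℝ :=
  ⋃ i ∈ Finset.range (k + 1),
    if decide (i % 2 = 0) = b then Set.Icc (extCuts k c i) (extCuts k c (i + 1)) else ∅

/-- Alice's Stackelberg value with `k` cuts: max of `V_A(Z_A)` over alternating partitions
`(Z_A, Z_B)` induced by `k` cut points with `V_B(Z_B) ≥ 1/2`. -/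
def stackelbergValue (k : ℕ) (vA vB : ℝ → ℝ) : ℝ :=
  sSup { u : ℝ | ∃ (c : Fin k → ℝ) (b : Bool), ValidCuts k c ∧
    1 / 2 ≤ pieceVal vB (altPiece k c (!b)) ∧ u = pieceVal vA (altPiece k c b) }

/-- A history of play: the list of (Alice's cuts, Bob's choice) in past rounds. -/
abbrev Hist (k : ℕ) := List ((Fin k → ℝ) × Bool)

/-- Alice's deterministic strategy: horizon and history ↦ next cut vector. -/
abbrev AliceStrategy (k : ℕ) := ℕ → Hist k → (Fin k → ℝ)

/-- Bob's deterministic strategy: horizon, history, and Alice's current cuts ↦ choice. -/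
abbrev BobStrategy (k : ℕ) := ℕ → Hist k → (Fin k → ℝ) → Bool

/-- The history of play after `t` rounds. -/
def playHist (k : ℕ) (SA : AliceStrategy k) (SB : BobStrategy k) (T : ℕ) : ℕ → Hist k
  | 0 => []
  | t + 1 =>
      let h := playHist k SA SB T t
      let cuts := SA T h
      h ++ [(cuts, SB T h cuts)]

/-- Alice's cuts in round `t` (0-indexed). -/
def roundCuts (k : ℕ) (SA : AliceStrategy k) (SB : BobStrategy k) (T t : ℕ) : Fin k → ℝ :=
  SA T (playHist k SA SB T t)

/-- Bob's choice in round `t` (0-indexed). -/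
def roundChoice (k : ℕ) (SA : AliceStrategy k) (SB : BobStrategy k) (T t : ℕ) : Bool :=
  SB T (playHist k SA SB T t) (roundCuts k SA SB T t)

/-- Alice's Stackelberg regret over horizon `T`: in each round she receives the value of
the piece Bob did not choose. -/
def aliceRegret (k : ℕ) (vA vB : ℝ → ℝ) (SA : AliceStrategy k) (SB : BobStrategy k)
    (T : ℕ) : ℝ :=
  ∑ t ∈ Finset.range T,
    (stackelbergValue k vA vB -
      pieceVal vA (altPiece k (roundCuts k SA SB T t) (!(roundChoice k SA SB T t))))

/-- Bob's regret over horizon `T` relative to always choosing his preferred piece. -/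
def bobRegret (k : ℕ) (vB : ℝ → ℝ) (SA : AliceStrategy k) (SB : BobStrategy k) (T : ℕ) : ℝ :=
  ∑ t ∈ Finset.range T,
    (max (pieceVal vB (altPiece k (roundCuts k SA SB T t) true))
        (pieceVal vB (altPiece k (roundCuts k SA SB T t) false)) -
      pieceVal vB (altPiece k (roundCuts k SA SB T t) (roundChoice k SA SB T t)))

/-- Bob's strategy guarantees regret at most `R T` against every Alice strategy and horizon. -/
def BobGuarantees (k : ℕ) (vB : ℝ → ℝ) (SB : BobStrategy k) (R : ℕ → ℝ) : Prop :=
  ∀ (SA : AliceStrategy k) (T : ℕ), bobRegret k vB SA SB T ≤ R T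

/-- The myopic Bob: chooses the piece of larger `V_B`-value, breaking ties towards
the piece of smaller `V_A`-value. -/
def myopicBob (k : ℕ) (vA vB : ℝ → ℝ) : BobStrategy k := fun _ _ c =>
  if pieceVal vB (altPiece k c false) < pieceVal vB (altPiece k c true) then true
  else if pieceVal vB (altPiece k c true) < pieceVal vB (altPiece k c false) then false
  else if pieceVal vA (altPiece k c true) ≤ pieceVal vA (altPiece k c false) then true
  else false

/-- Alice's strategy always produces valid cut vectors. -/
def AliceValid (k : ℕ) (SA : AliceStrategy k) : Prop := ∀ T h, ValidCuts k (SA T h)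

/-- The common length of the high-value intervals: `ℓ^k = 1/(3(⌊k/2⌋ + 1/2))`. -/
def ell (k : ℕ) : ℝ := 1 / (3 * ((k / 2 : ℕ) + 1 / 2))

/-- The number of high-value intervals: `⌊k/2⌋ + 1`. -/
def nHigh (k : ℕ) : ℕ := k / 2 + 1

/-- The number of low-value intervals: `⌈k/2⌉`. -/
def nLow (k : ℕ) : ℕ := (k + 1) / 2

/-- The common length of the low-value intervals. -/
def lowLen (k : ℕ) : ℝ := (1 - nHigh k * ell k) / nLow k

/-- Left endpoint of the `j`-th interval (0-indexed; the intervals alternate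
high, low, high, …, starting with a high-value interval). -/
def bd (k : ℕ) (j : ℕ) : ℝ := ((j + 1) / 2 : ℕ) * ell k + (j / 2 : ℕ) * lowLen k

/-- The union `H^k` of the high-value intervals (even-indexed). -/
def Hset (k : ℕ) : Set ℝ :=
  ⋃ j ∈ Finset.range (k + 1),
    if j % 2 = 0 then Set.Icc (bd k j) (bd k (j + 1)) else ∅

/-- The union `L^k` of the (interiors of the) low-value intervals (odd-indexed). -/
def Lset (k : ℕ) : Set ℝ :=
  ⋃ j ∈ Finset.range (k + 1),
    if j % 2 = 1 then Set.Ioo (bd k j) (bd k (j + 1)) else ∅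

/-- The density of the low-value region: `(1 - (3/2)μ(H^k))/μ(L^k)`. -/
def lowDens (k : ℕ) : ℝ :=
  (1 - 3 / 2 * (volume (Hset k)).toReal) / (volume (Lset k)).toReal

/-- The unspiked value density `σ₀^k`: `3/2` on `H^k`, `lowDens k` elsewhere. -/
def sigma0 (k : ℕ) : ℝ → ℝ := fun x => if x ∈ Hset k then 3 / 2 else lowDens k

/-- The spiked value density `σ_{w;z}^k`: equal to `2` for `x/ℓ^k ∈ (z-w, z]`, to `1` for
`x/ℓ^k ∈ (z, z+w)`, and to `σ₀^k(x)` otherwise. -/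
def sigmaSpike (k : ℕ) (w z : ℝ) : ℝ → ℝ := fun x =>
  if x / ell k ∈ Set.Ioc (z - w) z then 2
  else if x / ell k ∈ Set.Ioo z (z + w) then 1
  else sigma0 k x

/-!
The spike raises the value of `B` only if `B` contains a point of the spike and misses a later
point of the first high-value interval. If the `σ₀`-value of `B` is below `1/2` while `μ(B)`
exceeds the bound, then `B` contains no high-value interval, since its value would be too large,
and is disjoint from no low-value interval, since too much of its measure would then be of high
value. So `B` misses a point of every high-value interval and meets every low-value one.
Preceded by the point of the spike, these are `k + 2` increasing points alternately inside and
outside `B`, whereas `k` cuts leave only `k + 1` intervals.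
-/

lemma strictMono_index_of_mem_Icc {α : Type*} [LinearOrder α] {u : ℕ → α} (hu : Monotone u)
    {n : ℕ} {p : Fin (n + 1) → α} (hp : StrictMono p) {i : Fin (n + 1) → ℕ}
    (hmem : ∀ j, p j ∈ Icc (u (i j)) (u (i j + 1)))
    (hne : ∀ j : Fin n, i j.castSucc ≠ i j.succ) : StrictMono i := by
  refine Fin.strictMono_iff_lt_succ.2 fun j => (hne j).lt_of_le (le_of_not_gt fun hlt => ?_)
  exact (hp j.castSucc_lt_succ).not_ge <|
    ((hmem j.succ).2.trans (hu hlt)).trans (hmem j.castSucc).1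

lemma exists_mem_Icc_succ {α : Type*} [LinearOrder α] {u : ℕ → α} {x : α} {n : ℕ}
    (h0 : u 0 ≤ x) (hn : x ≤ u (n + 1)) : ∃ i ≤ n, x ∈ Icc (u i) (u (i + 1)) := by
  induction n with
  | zero => exact ⟨0, le_rfl, h0, hn⟩
  | succ n ih =>
    rcases le_total x (u (n + 1)) with h | h
    · obtain ⟨i, hi, hx⟩ := ih h
      exact ⟨i, by omega, hx⟩
    · exact ⟨n + 1, le_rfl, h, hn⟩

lemma strictMono_of_mem_Ioo {α : Type*} [Preorder α] {u : ℕ → α} (hu : Monotone u) {n : ℕ}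
    {p : Fin n → α} (hp : ∀ j : Fin n, p j ∈ Ioo (u j) (u (j + 1))) : StrictMono p :=
  fun i j hij => ((hp i).2.trans_le (hu (Nat.succ_le_of_lt hij))).trans (hp j).1

lemma exists_strictMono_mem_iff_even {α : Type*} [Preorder α] {u : ℕ → α} (hu : Monotone u)
    {n : ℕ} {B : Set α} {p q₀ : α} (hp : p ∈ B) (hq₀ : q₀ ∉ B) (hpq₀ : p < q₀)
    (hq₀u : q₀ ∈ Ioo (u 0) (u 1))
    (hinterval : ∀ j ≤ n, ∃ q ∈ Ioo (u j) (u (j + 1)), q ∈ B ↔ Odd j) :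
    ∃ x : Fin (n + 2) → α, StrictMono x ∧ x 0 = p ∧
      (∀ j : Fin (n + 1), x j.succ ∈ Ioo (u j) (u (j + 1))) ∧
      ∀ j, x j ∈ B ↔ Even (j : ℕ) := by
  have hpoint (j : Fin (n + 1)) :
      ∃ q ∈ Ioo (u j) (u (j + 1)), (q ∈ B ↔ Odd (j : ℕ)) ∧ p < q := by
    cases j using Fin.cases with
    | zero => exact ⟨q₀, hq₀u, by simp [hq₀], hpq₀⟩
    | succ j =>
      obtain ⟨q, hq, hqB⟩ := hinterval j.succ j.succ.is_le
      exact ⟨q, hq, hqB, (hpq₀.trans hq₀u.2).trans_le <| (hu (by simp)).trans hq.1.le⟩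
  choose q hq hqB hpq using hpoint
  refine ⟨Matrix.vecCons p q, (strictMono_of_mem_Ioo hu hq).vecCons (hpq 0), rfl, hq, ?_⟩
  refine Fin.cases (by simpa using hp) fun j => ?_
  simp only [Matrix.cons_val_succ, hqB, Fin.val_succ, Nat.even_add_one, Nat.not_even_iff_odd]

lemma volume_real_biUnion_of_Ioo_subset_of_subset_Icc {ι : Type*} {u : ℕ → ℝ} (hu : Monotone u)
    {φ : ι → ℕ} (hφ : φ.Injective) {s : ι → Set ℝ}
    (hIoo : ∀ i, Ioo (u (φ i)) (u (φ i + 1)) ⊆ s i)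
    (hIcc : ∀ i, s i ⊆ Icc (u (φ i)) (u (φ i + 1))) (t : Finset ι) :
    volume.real (⋃ i ∈ t, s i) = ∑ i ∈ t, (u (φ i + 1) - u (φ i)) := by
  have hs : ∀ i, s i =ᵐ[volume] Ioo (u (φ i)) (u (φ i + 1)) := fun i =>
    ((hIcc i).eventuallyLE.trans Ioo_ae_eq_Icc.symm.le).antisymm (hIoo i).eventuallyLE
  have hdisj : Pairwise fun i j => AEDisjoint volume (s i) (s j) := fun i j hij =>
    (hu.pairwise_disjoint_on_Ioo_succ (hφ.ne hij)).aedisjoint.congr (hs i) (hs j)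
  rw [measureReal_biUnion_finset₀ (hdisj.set_pairwise _)
    (fun i _ => measurableSet_Ioo.nullMeasurableSet.congr (hs i).symm)
    (fun i _ => measure_ne_top_of_subset (hIcc i) measure_Icc_lt_top.ne)]
  refine Finset.sum_congr rfl fun i _ => ?_
  rw [measureReal_congr (hs i), Real.volume_real_Ioo_of_le (hu (φ i).le_succ)]

lemma exists_mem_Ioc_exists_notMem_Ioo {a m d : ℝ} (had : m - a ≤ d - m) {B : Set ℝ}
    (hlt : volume.real (Ioo m d ∩ B) < volume.real (Ioc a m ∩ B)) :
    (∃ p ∈ Ioc a m, p ∈ B) ∧ ∃ q ∈ Ioo m d, q ∉ B := by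
  obtain ⟨p, hp, hpB⟩ : (Ioc a m ∩ B).Nonempty :=
    nonempty_of_measureReal_ne_zero (measureReal_nonneg.trans_lt hlt).ne'
  refine ⟨⟨p, hp, hpB⟩, ?_⟩
  by_contra! hsub
  have ham : a ≤ m := hp.1.le.trans hp.2
  have hle : volume.real (Ioc a m ∩ B) ≤ volume.real (Ioc a m) :=
    measureReal_mono inter_subset_left measure_Ioc_lt_top.ne
  rw [inter_eq_left.2 hsub, Real.volume_real_Ioo_of_le (by linarith)] at hlt
  rw [Real.volume_real_Ioc_of_le ham] at hle
  linarith

section Cuts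

variable {k : ℕ} {c : Fin k → ℝ} {b : Bool}

lemma extCuts_zero : extCuts k c 0 = 0 := by simp [extCuts]

lemma extCuts_last : extCuts k c (k + 1) = 1 := by simp [extCuts]

lemma extCuts_monotone (hc : ValidCuts k c) : Monotone (extCuts k c) := by
  refine monotone_nat_of_le_succ fun n => ?_
  rcases n with _ | n
  · rw [extCuts_zero]
    simp only [extCuts, Nat.add_one_ne_zero, if_false]
    split_ifs
    · exact (hc.2 _).1
    · exact zero_le_one
  · simp only [extCuts, Nat.add_one_ne_zero, if_false, Nat.add_sub_cancel]
    split_ifs with hn hn' hn'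
    · exact hc.1 (Fin.mk_le_mk.2 n.le_succ)
    · exact (hc.2 _).2
    · omega
    · exact le_rfl

lemma mem_altPiece {x : ℝ} : x ∈ altPiece k c b ↔
    ∃ i ≤ k, decide (i % 2 = 0) = b ∧ x ∈ Icc (extCuts k c i) (extCuts k c (i + 1)) := by
  simp only [altPiece, mem_iUnion, Finset.mem_range, Nat.lt_succ_iff, exists_prop]
  refine exists_congr fun i => and_congr_right fun _ => ?_
  split_ifs with h <;> simp [h]

lemma altPiece_subset_Icc (hc : ValidCuts k c) : altPiece k c b ⊆ Icc 0 1 := by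
  intro x hx
  obtain ⟨i, hi, -, hx⟩ := mem_altPiece.1 hx
  exact Icc_subset_Icc (extCuts_zero.symm.trans_le (extCuts_monotone hc i.zero_le))
    ((extCuts_monotone hc (Nat.succ_le_succ hi)).trans_eq extCuts_last) hx

/- At a cut point several indices are possible; only the choice made here reflects membership. -/
lemma exists_index_mem_altPiece_iff {x : ℝ} (hx : x ∈ Icc (0 : ℝ) 1) :
    ∃ i ≤ k, x ∈ Icc (extCuts k c i) (extCuts k c (i + 1)) ∧
      (x ∈ altPiece k c b ↔ decide (i % 2 = 0) = b) := by
  by_cases hxB : x ∈ altPiece k c b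
  · obtain ⟨i, hi, hib, hxi⟩ := mem_altPiece.1 hxB
    exact ⟨i, hi, hxi, iff_of_true hxB hib⟩
  · obtain ⟨i, hi, hxi⟩ := exists_mem_Icc_succ (u := extCuts k c) (n := k)
      (extCuts_zero.trans_le hx.1) (hx.2.trans_eq extCuts_last.symm)
    exact ⟨i, hi, hxi, iff_of_false hxB fun hib => hxB (mem_altPiece.2 ⟨i, hi, hib, hxi⟩)⟩

lemma exists_consecutive_mem_altPiece_iff (hc : ValidCuts k c) {p : Fin (k + 2) → ℝ}
    (hp : StrictMono p) (hp01 : ∀ j, p j ∈ Icc (0 : ℝ) 1) :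
    ∃ j : Fin (k + 1), p j.castSucc ∈ altPiece k c b ↔ p j.succ ∈ altPiece k c b := by
  choose i hik hmem hiff using fun j =>
    exists_index_mem_altPiece_iff (k := k) (c := c) (b := b) (hp01 j)
  by_contra hnone
  have halt (j : Fin (k + 1)) : i j.castSucc ≠ i j.succ := fun hj =>
    hnone ⟨j, by rw [hiff, hiff, hj]⟩
  have hi : StrictMono i := strictMono_index_of_mem_Icc (extCuts_monotone hc) hp hmem halt
  have hcard := Fintype.card_le_of_injective
    (fun j => (⟨i j, Nat.lt_succ_of_le (hik j)⟩ : Fin (k + 1)))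
    fun _ _ h => hi.injective (Fin.mk.inj h)
  simp only [Fintype.card_fin] at hcard
  omega

end Cuts

section Intervals

variable {k : ℕ}

lemma ell_eq : ell k = 2 / (3 * (2 * (k / 2 : ℕ) + 1)) := by
  unfold ell
  field_simp

lemma ell_pos : 0 < ell k := by
  rw [ell_eq]
  positivity

lemma one_sub_nHigh_mul_ell :
    1 - nHigh k * ell k = (4 * (k / 2 : ℕ) + 1) / (3 * (2 * (k / 2 : ℕ) + 1)) := by
  rw [ell_eq, nHigh]
  push_cast
  field_simp
  ring

lemma nLow_pos (hk : k ≠ 0) : 0 < nLow k := by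
  unfold nLow
  omega

lemma nLow_mul_lowLen (hk : k ≠ 0) : nLow k * lowLen k = 1 - nHigh k * ell k :=
  mul_div_cancel₀ _ (Nat.cast_ne_zero.2 (nLow_pos hk).ne')

lemma lowLen_nonneg : 0 ≤ lowLen k := by
  rw [lowLen, one_sub_nHigh_mul_ell]
  positivity

lemma bd_two_mul (i : ℕ) : bd k (2 * i) = i * ell k + i * lowLen k := by
  rw [bd, show (2 * i + 1) / 2 = i by omega, show 2 * i / 2 = i by omega]

lemma bd_two_mul_add_one (i : ℕ) : bd k (2 * i + 1) = (i + 1) * ell k + i * lowLen k := by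
  rw [bd, show (2 * i + 1 + 1) / 2 = i + 1 by omega, show (2 * i + 1) / 2 = i by omega]
  push_cast
  rfl

lemma bd_high_length (i : ℕ) : bd k (2 * i + 1) - bd k (2 * i) = ell k := by
  rw [bd_two_mul_add_one, bd_two_mul]
  ring

lemma bd_low_length (i : ℕ) : bd k (2 * i + 1 + 1) - bd k (2 * i + 1) = lowLen k := by
  rw [show 2 * i + 1 + 1 = 2 * (i + 1) by ring, bd_two_mul_add_one, bd_two_mul]
  push_cast
  ring

lemma bd_zero : bd k 0 = 0 := by simp [bd]

lemma bd_one : bd k 1 = ell k := by simp [bd]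

lemma bd_last (hk : k ≠ 0) : bd k (k + 1) = 1 := by
  have h := nLow_mul_lowLen hk
  have hH : (k + 1 + 1) / 2 = nHigh k := by unfold nHigh; omega
  rw [bd, hH, ← nLow, h]
  ring

lemma bd_monotone : Monotone (bd k) := by
  refine monotone_nat_of_le_succ fun j => ?_
  obtain ⟨i, rfl | rfl⟩ := j.even_or_odd'
  · exact sub_nonneg.1 (ell_pos.le.trans_eq (bd_high_length i).symm)
  · exact sub_nonneg.1 (lowLen_nonneg.trans_eq (bd_low_length i).symm)

lemma Icc_bd_subset (hk : k ≠ 0) {j : ℕ} (hj : j ≤ k) : Icc (bd k j) (bd k (j + 1)) ⊆ Icc 0 1 :=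
  Icc_subset_Icc (bd_zero.symm.trans_le (bd_monotone j.zero_le))
    ((bd_monotone (Nat.succ_le_succ hj)).trans_eq (bd_last hk))

lemma Hset_eq : Hset k = ⋃ i ∈ Finset.range (nHigh k), Icc (bd k (2 * i)) (bd k (2 * i + 1)) := by
  ext x
  simp only [Hset, mem_iUnion, Finset.mem_range, exists_prop, nHigh]
  constructor
  · rintro ⟨j, hj, hx⟩
    obtain ⟨i, rfl | rfl⟩ := j.even_or_odd'
    · exact ⟨i, by omega, by simpa using hx⟩
    · simp at hx
  · rintro ⟨i, hi, hx⟩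
    exact ⟨2 * i, by omega, by simpa using hx⟩

lemma Lset_eq :
    Lset k = ⋃ i ∈ Finset.range (nLow k), Ioo (bd k (2 * i + 1)) (bd k (2 * i + 1 + 1)) := by
  ext x
  simp only [Lset, mem_iUnion, Finset.mem_range, exists_prop, nLow]
  constructor
  · rintro ⟨j, hj, hx⟩
    obtain ⟨i, rfl | rfl⟩ := j.even_or_odd'
    · simp at hx
    · exact ⟨i, by omega, by simpa using hx⟩
  · rintro ⟨i, hi, hx⟩
    exact ⟨2 * i + 1, by omega, by simpa using hx⟩

lemma Icc_bd_subset_Hset {i : ℕ} (hi : 2 * i ≤ k) :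
    Icc (bd k (2 * i)) (bd k (2 * i + 1)) ⊆ Hset k := by
  rw [Hset_eq]
  exact subset_biUnion_of_mem (u := fun i => Icc (bd k (2 * i)) (bd k (2 * i + 1)))
    (Finset.mem_coe.2 (Finset.mem_range.2 (by unfold nHigh; omega)))

lemma Icc_zero_ell_subset_Hset : Icc 0 (ell k) ⊆ Hset k := by
  simpa [bd_zero, bd_one] using Icc_bd_subset_Hset (k := k) (i := 0) k.zero_le

lemma Hset_subset_Icc (hk : k ≠ 0) : Hset k ⊆ Icc 0 1 := by
  rw [Hset_eq]
  exact iUnion₂_subset fun i hi =>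
    Icc_bd_subset hk (by have := Finset.mem_range.1 hi; unfold nHigh at this; omega)

lemma disjoint_Hset_Ioo_bd (i : ℕ) :
    Disjoint (Hset k) (Ioo (bd k (2 * i + 1)) (bd k (2 * i + 1 + 1))) := by
  simp only [Hset_eq, disjoint_iUnion_left]
  refine fun i' _ => disjoint_left.2 fun x hx hx' => ?_
  rcases le_or_gt i' i with h | h
  · exact (hx'.1.trans_le hx.2).not_ge (bd_monotone (by omega))
  · exact (hx'.2.trans_le' hx.1).not_ge (bd_monotone (by omega))

lemma measurableSet_Hset : MeasurableSet (Hset k) := by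
  rw [Hset_eq]
  exact Finset.measurableSet_biUnion _ fun _ _ => measurableSet_Icc

lemma volume_real_Hset : volume.real (Hset k) = nHigh k * ell k := by
  rw [Hset_eq, volume_real_biUnion_of_Ioo_subset_of_subset_Icc bd_monotone
    (mul_right_injective₀ two_ne_zero) (fun _ => Ioo_subset_Icc_self) (fun _ => Subset.rfl)]
  simp [bd_high_length]

lemma volume_real_Lset : volume.real (Lset k) = nLow k * lowLen k := by
  rw [Lset_eq, volume_real_biUnion_of_Ioo_subset_of_subset_Icc bd_monotone
    (φ := fun i => 2 * i + 1) (fun i j h => by simpa using h)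
    (fun _ => Subset.rfl) (fun _ => Ioo_subset_Icc_self)]
  simp [bd_low_length]

end Intervals

section Densities

variable {k : ℕ} {B : Set ℝ}

lemma lowDens_eq (hk : k ≠ 0) : lowDens k = 3 * (k / 2 : ℕ) / (4 * (k / 2 : ℕ) + 1) := by
  have hnHigh : nHigh k * ell k = 1 - (4 * (k / 2 : ℕ) + 1) / (3 * (2 * (k / 2 : ℕ) + 1)) := by
    rw [← one_sub_nHigh_mul_ell, sub_sub_cancel]
  rw [lowDens, ← measureReal_def, ← measureReal_def, volume_real_Hset, volume_real_Lset,
    nLow_mul_lowLen hk, one_sub_nHigh_mul_ell, hnHigh]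
  field_simp
  ring

lemma three_halves_sub_lowDens (hk : k ≠ 0) :
    3 / 2 - lowDens k = 3 * (2 * (k / 2 : ℕ) + 1) / (2 * (4 * (k / 2 : ℕ) + 1)) := by
  rw [lowDens_eq hk]
  field_simp
  ring

lemma lowDens_lt (hk : k ≠ 0) : lowDens k < 3 / 2 := by
  rw [← sub_pos, three_halves_sub_lowDens hk]
  positivity

lemma three_halves_sub_lowDens_mul_ell (hk : k ≠ 0) :
    (3 / 2 - lowDens k) * ell k = 1 / (4 * (k / 2 : ℕ) + 1) := by
  rw [three_halves_sub_lowDens hk, ell_eq]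
  field_simp

lemma three_halves_sub_lowDens_mul_volume_low (hk : k ≠ 0) :
    (3 / 2 - lowDens k) * (nLow k * lowLen k) = 1 / 2 := by
  rw [three_halves_sub_lowDens hk, nLow_mul_lowLen hk, one_sub_nHigh_mul_ell]
  field_simp

lemma integrableOn_sigma0 (hB : volume B ≠ ⊤) : IntegrableOn (sigma0 k) B :=
  Integrable.piecewise measurableSet_Hset (integrableOn_const hB).integrableOn
    (integrableOn_const hB).integrableOn

lemma setIntegral_sigma0 (hB : volume B ≠ ⊤) : ∫ x in B, sigma0 k x =
    3 / 2 * volume.real (B ∩ Hset k) + lowDens k * volume.real (B \ Hset k) := by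
  change ∫ x in B, (Hset k).piecewise (fun _ => 3 / 2) (fun _ => lowDens k) x = _
  rw [integral_piecewise measurableSet_Hset (integrableOn_const hB).integrableOn
      (integrableOn_const hB).integrableOn, setIntegral_const, setIntegral_const,
    measureReal_restrict_apply measurableSet_Hset,
    measureReal_restrict_apply measurableSet_Hset.compl,
    inter_comm, inter_comm _ B, ← sdiff_eq, smul_eq_mul, smul_eq_mul, mul_comm,
    mul_comm (lowDens k)]

lemma sigmaSpike_eq {w z : ℝ} (hwz : w ≤ z) (hzw : z + w ≤ 1) :
    sigmaSpike k w z = sigma0 k +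
      ((Ioc ((z - w) * ell k) (z * ell k)).indicator (fun _ => 1 / 2) -
        (Ioo (z * ell k) ((z + w) * ell k)).indicator (fun _ => 1 / 2)) := by
  ext x
  have hsigma0 (hx : x / ell k ∈ Icc 0 1) : sigma0 k x = 3 / 2 := by
    rw [mem_Icc, le_div_iff₀ ell_pos, zero_mul, div_le_one ell_pos] at hx
    exact if_pos (Icc_zero_ell_subset_Hset hx)
  simp only [Pi.add_apply, Pi.sub_apply, indicator_apply, mem_Ioc, mem_Ioo, sigmaSpike,
    ← lt_div_iff₀ (ell_pos (k := k)), ← div_le_iff₀ (ell_pos (k := k)),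
    ← div_lt_iff₀ (ell_pos (k := k))]
  split_ifs with hleft hright hright
  · linarith [hleft.2, hright.1]
  · rw [hsigma0 ⟨by linarith [hleft.1], by linarith [hleft.1, hleft.2]⟩]
    norm_num
  · rw [hsigma0 ⟨by linarith [hright.1, hright.2], by linarith [hright.2]⟩]
    norm_num
  · ring

lemma setIntegral_sigmaSpike {w z : ℝ} (hwz : w ≤ z) (hzw : z + w ≤ 1) (hB : volume B ≠ ⊤) :
    ∫ x in B, sigmaSpike k w z x = (∫ x in B, sigma0 k x) +
      (volume.real (Ioc ((z - w) * ell k) (z * ell k) ∩ B) -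
        volume.real (Ioo (z * ell k) ((z + w) * ell k) ∩ B)) / 2 := by
  have hint {s : Set ℝ} (hs : MeasurableSet s) :
      IntegrableOn (s.indicator fun _ => (1 / 2 : ℝ)) B :=
    (integrableOn_const hB).indicator hs
  rw [sigmaSpike_eq hwz hzw, integral_add' (integrableOn_sigma0 hB)
      ((hint measurableSet_Ioc).sub (hint measurableSet_Ioo)),
    integral_sub' (hint measurableSet_Ioc) (hint measurableSet_Ioo),
    integral_indicator_const _ measurableSet_Ioc, integral_indicator_const _ measurableSet_Ioo,
    measureReal_restrict_apply measurableSet_Ioc, measureReal_restrict_apply measurableSet_Ioo,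
    smul_eq_mul, smul_eq_mul]
  ring

lemma exists_mem_lt_notMem_of_sigma0_lt_sigmaSpike {w z : ℝ} (hwz : w ≤ z) (hzw : z + w ≤ 1)
    (hB : volume B ≠ ⊤) (hlt : ∫ x in B, sigma0 k x < ∫ x in B, sigmaSpike k w z x) :
    ∃ p ∈ B, ∃ q ∉ B, 0 < p ∧ p < q ∧ q < ell k := by
  rw [setIntegral_sigmaSpike hwz hzw hB] at hlt
  have hgain : volume.real (Ioo (z * ell k) ((z + w) * ell k) ∩ B) <
      volume.real (Ioc ((z - w) * ell k) (z * ell k) ∩ B) := by linarith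
  obtain ⟨⟨p, hp, hpB⟩, q, hq, hqB⟩ := exists_mem_Ioc_exists_notMem_Ioo (by linarith) hgain
  exact ⟨p, hpB, q, hqB, (mul_nonneg (sub_nonneg.2 hwz) ell_pos.le).trans_lt hp.1,
    hp.2.trans_lt hq.1, hq.2.trans_le (mul_le_of_le_one_left ell_pos.le hzw)⟩

end Densities

section MeasureBounds

variable {k : ℕ} {B : Set ℝ}

lemma volume_real_lt_of_high_subset (hk : k ≠ 0) (hB : volume B ≠ ⊤)
    (hbase : ∫ x in B, sigma0 k x < 1 / 2) {i : ℕ} (hi : 2 * i ≤ k)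
    (hsub : Ioo (bd k (2 * i)) (bd k (2 * i + 1)) ⊆ B) :
    volume.real B < 2 / 3 - 1 / (6 * k) := by
  have hell : ell k ≤ volume.real (B ∩ Hset k) := by
    rw [← bd_high_length i, ← Real.volume_real_Ioo_of_le (bd_monotone (2 * i).le_succ)]
    exact measureReal_mono
      (subset_inter hsub (Ioo_subset_Icc_self.trans (Icc_bd_subset_Hset hi)))
      (measure_ne_top_of_subset inter_subset_left hB)
  have hvalue : lowDens k * volume.real B + 1 / (4 * (k / 2 : ℕ) + 1) < 1 / 2 := by
    calc lowDens k * volume.real B + 1 / (4 * (k / 2 : ℕ) + 1)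
        = lowDens k * volume.real B + (3 / 2 - lowDens k) * ell k := by
          rw [three_halves_sub_lowDens_mul_ell hk]
      _ ≤ lowDens k * volume.real B + (3 / 2 - lowDens k) * volume.real (B ∩ Hset k) := by
          gcongr
          exact (sub_pos.2 (lowDens_lt hk)).le
      _ = ∫ x in B, sigma0 k x := by
          rw [setIntegral_sigma0 hB, ← measureReal_inter_add_sdiff measurableSet_Hset hB]
          ring
      _ < 1 / 2 := hbase
  have hscaled : 3 * (k / 2 : ℕ) * volume.real B < 2 * (k / 2 : ℕ) - 1 / 2 := by
    rw [lowDens_eq hk] at hvalue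
    field_simp at hvalue
    linarith
  by_contra! hle
  have hratio : ((k / 2 : ℕ) : ℝ) / k ≤ 1 :=
    div_le_one_of_le₀ (Nat.cast_le.2 (Nat.div_le_self k 2)) k.cast_nonneg
  have hmul := mul_le_mul_of_nonneg_left hle (by positivity : (0 : ℝ) ≤ 3 * (k / 2 : ℕ))
  have hexpand : 3 * ((k / 2 : ℕ) : ℝ) * (2 / 3 - 1 / (6 * k)) =
      2 * (k / 2 : ℕ) - (k / 2 : ℕ) / k / 2 := by ring
  linarith

lemma volume_real_sdiff_Hset_le_of_disjoint_low (hk : k ≠ 0) (hB : B ⊆ Icc 0 1) {i : ℕ}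
    (hi : 2 * i + 1 ≤ k) (hdisj : Disjoint (Ioo (bd k (2 * i + 1)) (bd k (2 * i + 1 + 1))) B) :
    volume.real (B \ Hset k) ≤ (nLow k - 1) * lowLen k := by
  set low := Ioo (bd k (2 * i + 1)) (bd k (2 * i + 1 + 1))
  have hlow : low ⊆ Icc 0 1 \ Hset k := subset_sdiff.2
    ⟨Ioo_subset_Icc_self.trans (Icc_bd_subset hk hi), (disjoint_Hset_Ioo_bd i).symm⟩
  calc volume.real (B \ Hset k)
      ≤ volume.real ((Icc 0 1 \ Hset k) \ low) :=
        measureReal_mono (subset_sdiff.2 ⟨sdiff_subset_sdiff_left hB,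
          hdisj.symm.mono_left sdiff_subset⟩)
          (measure_ne_top_of_subset (sdiff_subset.trans sdiff_subset) measure_Icc_lt_top.ne)
    _ = volume.real (Icc (0 : ℝ) 1) - volume.real (Hset k) - volume.real low := by
        rw [measureReal_sdiff hlow measurableSet_Ioo
            (measure_ne_top_of_subset sdiff_subset measure_Icc_lt_top.ne),
          measureReal_sdiff (Hset_subset_Icc hk) measurableSet_Hset measure_Icc_lt_top.ne]
    _ = (nLow k - 1) * lowLen k := by
        rw [Real.volume_real_Ioo_of_le (bd_monotone (Nat.le_succ _)), bd_low_length,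
          volume_real_Hset, sub_mul, nLow_mul_lowLen hk]
        simp

lemma volume_real_lt_of_disjoint_low (hk : k ≠ 0) (hB : B ⊆ Icc 0 1)
    (hbase : ∫ x in B, sigma0 k x < 1 / 2) {i : ℕ} (hi : 2 * i + 1 ≤ k)
    (hdisj : Disjoint (Ioo (bd k (2 * i + 1)) (bd k (2 * i + 1 + 1))) B) :
    volume.real B < 2 / 3 - 1 / (6 * k) := by
  have hBfin : volume B ≠ ⊤ := measure_ne_top_of_subset hB measure_Icc_lt_top.ne
  have hnLow : (0 : ℝ) < nLow k := Nat.cast_pos.2 (nLow_pos hk)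
  have hdeficit : (3 / 2 - lowDens k) * volume.real (B \ Hset k) ≤ 1 / 2 - 1 / (2 * nLow k) :=
    calc (3 / 2 - lowDens k) * volume.real (B \ Hset k)
        ≤ (3 / 2 - lowDens k) * ((nLow k - 1) * lowLen k) := by
          gcongr
          · exact (sub_pos.2 (lowDens_lt hk)).le
          · exact volume_real_sdiff_Hset_le_of_disjoint_low hk hB hi hdisj
      _ = (3 / 2 - lowDens k) * (nLow k * lowLen k) * (1 - 1 / nLow k) := by
          field_simp
      _ = 1 / 2 - 1 / (2 * nLow k) := by
          rw [three_halves_sub_lowDens_mul_volume_low hk]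
          ring
  have hvalue : ∫ x in B, sigma0 k x =
      3 / 2 * volume.real B - (3 / 2 - lowDens k) * volume.real (B \ Hset k) := by
    rw [setIntegral_sigma0 hBfin, ← measureReal_inter_add_sdiff measurableSet_Hset hBfin]
    ring
  have hle : 1 / (6 * k : ℝ) ≤ 1 / (2 * nLow k) / 3 := by
    rw [div_div, div_le_div_iff_of_pos_left one_pos (by positivity) (by positivity)]
    have : nLow k ≤ k := by unfold nLow; omega
    have : (nLow k : ℝ) ≤ k := Nat.cast_le.2 this
    linarith
  have hpos : 0 < 1 / (2 * nLow k : ℝ) := by positivity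
  linarith

end MeasureBounds

theorem distinguishing_partition_suboptimal_general {k : ℕ} (hk : k ≠ 0) {w z : ℝ}
    (hwz : w ≤ z) (hzw : z + w ≤ 1) {c : Fin k → ℝ} (hc : ValidCuts k c) {b : Bool}
    (hspike : 1 / 2 < ∫ x in altPiece k c b, sigmaSpike k w z x)
    (hbase : ∫ x in altPiece k c b, sigma0 k x < 1 / 2) :
    volume.real (altPiece k c b) < 2 / 3 - 1 / (6 * k) := by
  set B := altPiece k c b
  have hB : B ⊆ Icc 0 1 := altPiece_subset_Icc hc
  have hBfin : volume B ≠ ⊤ := measure_ne_top_of_subset hB measure_Icc_lt_top.ne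
  by_contra hlarge
  have hinterval : ∀ j ≤ k, ∃ q ∈ Ioo (bd k j) (bd k (j + 1)), q ∈ B ↔ Odd j := by
    intro j hj
    obtain ⟨i, rfl | rfl⟩ := j.even_or_odd'
    · obtain ⟨q, hq, hqB⟩ := not_subset.1 fun hsub =>
        hlarge (volume_real_lt_of_high_subset hk hBfin hbase hj hsub)
      exact ⟨q, hq, by simp [hqB]⟩
    · obtain ⟨q, hq, hqB⟩ := not_disjoint_iff.1 fun hdisj =>
        hlarge (volume_real_lt_of_disjoint_low hk hB hbase hj hdisj)
      exact ⟨q, hq, by simp [hqB]⟩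
  obtain ⟨p, hpB, q₀, hq₀B, hp0, hpq₀, hq₀⟩ :=
    exists_mem_lt_notMem_of_sigma0_lt_sigmaSpike hwz hzw hBfin (hbase.trans hspike)
  obtain ⟨x, hx, hxp, hxmem, hxB⟩ := exists_strictMono_mem_iff_even bd_monotone hpB hq₀B hpq₀
    ⟨bd_zero.trans_lt (hp0.trans hpq₀), hq₀.trans_eq bd_one.symm⟩ hinterval
  have hx01 : ∀ j, x j ∈ Icc (0 : ℝ) 1 := Fin.cases (hxp ▸ hB hpB) fun j =>
    Icc_bd_subset hk j.is_le (Ioo_subset_Icc_self (hxmem j))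
  obtain ⟨j, hj⟩ := exists_consecutive_mem_altPiece_iff (b := b) hc hx hx01
  rw [hxB, hxB, Fin.val_succ, Fin.val_castSucc, Nat.even_add_one] at hj
  exact iff_not_self hj

/-- distinguishing partitions are bad for Alice: let `k ≥ 2`,
`z ∈ [5/6, 11/12]`, `w ∈ (0, 1/48]`, and let `(A, B)` be the alternating partition of
`[0,1]` induced by `k` cut points (so `B = altPiece k c b` for some `b`). If
`∫_B σ_{w;z}^k > 1/2` and `∫_B σ₀^k < 1/2` — i.e. Bobs with densities `σ_{w;z}^k` and
`σ₀^k` strictly prefer different pieces — then `μ(B) ≤ 2/3 − 1/(6k)`. -/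
theorem distinguishing_partition_suboptimal (k : ℕ) (hk : 2 ≤ k)
    (z : ℝ) (hz : z ∈ Set.Icc (5/6 : ℝ) (11/12))
    (w : ℝ) (hw : w ∈ Set.Ioc (0 : ℝ) (1/48))
    (c : Fin k → ℝ) (hc : ValidCuts k c) (b : Bool)
    (hspike : 1/2 < ∫ x in altPiece k c b, sigmaSpike k w z x)
    (hbase : (∫ x in altPiece k c b, sigma0 k x) < 1/2) :
    (volume (altPiece k c b)).toReal ≤ 2/3 - 1/(6 * k) := by
  exact (distinguishing_partition_suboptimal_general (by omega) (by linarith [hz.1, hw.2])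
    (by linarith [hz.2, hw.2]) hc hspike hbase).le

end
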